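/- Let K be a commutative ℚ-algebra, q ≥ 2 an integer, and φ, β ∈ K. Define the matrix E_φ by E_φ(qn+i, qm+j) = φ^{n−m} · C(φ, i−j) · binom(n, m) for n ≥ m and 0 ≤ i, j < q, and E_φ(N, M) = 0 when n < m. Then: (a) E_1(qn+i, qm+j) = binom(n, m) if i ≥ j and 0 if i < j (i.e. E_1 is the exponential zero generalized Pascal matrix ₍₀,q₎P_e); (b) for all M ≤ N, Σ_{K=M}^{N} E_φ(N, K) · E_β(K, M) = E_{φ+β}(N, M). -/

import Mathlib

/-- The generalized binomial coefficient `C(φ,k) = binom(φ+k−1, k)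
= φ(φ+1)⋯(φ+k−1)/k!` for `k ≥ 0`, and `0` for `k < 0`. -/
noncomputable def genC {K : Type*} [CommRing K] [Algebra ℚ K] (φ : K) (k : ℤ) : K :=
  if 0 ≤ k then
    (∏ i ∈ Finset.range k.toNat, (φ + (i : K))) *
      algebraMap ℚ K (1 / (k.toNat.factorial : ℚ))
  else 0

/-- The matrix realizing the `φ`-th power of the exponential zero generalized Pascal
matrix `₍₀,q₎P_e`: `E_φ(qn+i, qm+j) = φ^{n−m}·C(φ, i−j)·binom(n,m)` for `n ≥ m` and
`0 ≤ i, j < q`, and `0` when `n < m`. -/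
noncomputable def Epow {K : Type*} [CommRing K] [Algebra ℚ K] (q : ℕ) (φ : K)
    (N M : ℕ) : K :=
  if M / q ≤ N / q then
    φ ^ (N / q - M / q) * genC φ ((N % q : ℕ) - (M % q : ℕ) : ℤ) *
      ((N / q).choose (M / q) : K)
  else 0

theorem genC_nat_succ {K : Type*} [CommRing K] [Algebra ℚ K] (φ : K) (n : ℕ) :
    ((n : K) + 1) * genC φ ((n + 1 : ℕ) : ℤ) = (φ + n) * genC φ (n : ℤ) := by
  have h : ((n : K) + 1) * algebraMap ℚ K (1 / ((n + 1).factorial : ℚ)) =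
      algebraMap ℚ K (1 / (n.factorial : ℚ)) := by
    have : ((n : K) + 1) = algebraMap ℚ K ((n : ℚ) + 1) := by simp
    rw [this, ← map_mul]
    congr 1
    have h1 : (n.factorial : ℚ) ≠ 0 := by positivity
    have h2 : (n : ℚ) + 1 ≠ 0 := by positivity
    rw [Nat.factorial_succ]
    push_cast
    field_simp
  unfold genC
  rw [if_pos (by positivity), if_pos (by positivity)]
  simp only [Int.toNat_natCast]
  rw [Finset.prod_range_succ, ← h]
  ring

theorem genC_zero' {K : Type*} [CommRing K] [Algebra ℚ K] (φ : K) :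
    genC φ ((0 : ℕ) : ℤ) = 1 := by
  simp [genC]

theorem genC_neg' {K : Type*} [CommRing K] [Algebra ℚ K] (φ : K) (k : ℤ) (h : k < 0) :
    genC φ k = 0 := by
  unfold genC
  rw [if_neg (by omega)]

theorem cancel_succ {K : Type*} [CommRing K] [Algebra ℚ K] (n : ℕ) (x y : K)
    (h : ((n : K) + 1) * x = ((n : K) + 1) * y) : x = y := by
  have hu : algebraMap ℚ K (1 / ((n : ℚ) + 1)) * ((n : K) + 1) = 1 := by
    have : ((n : K) + 1) = algebraMap ℚ K ((n : ℚ) + 1) := by simp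
    rw [this, ← map_mul]
    have h2 : (n : ℚ) + 1 ≠ 0 := by positivity
    rw [one_div_mul_cancel h2, map_one]
  calc x = (algebraMap ℚ K (1 / ((n : ℚ) + 1)) * ((n : K) + 1)) * x := by rw [hu, one_mul]
    _ = (algebraMap ℚ K (1 / ((n : ℚ) + 1)) * ((n : K) + 1)) * y := by
        rw [mul_assoc, h, mul_assoc]
    _ = y := by rw [hu, one_mul]

theorem genC_one {K : Type*} [CommRing K] [Algebra ℚ K] (n : ℕ) :
    genC (1 : K) (n : ℤ) = 1 := by
  induction n with
  | zero => exact genC_zero' _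
  | succ n ih =>
    apply cancel_succ n
    rw [genC_nat_succ, ih]
    ring

theorem genC_vand {K : Type*} [CommRing K] [Algebra ℚ K] (φ β : K) (n : ℕ) :
    ∑ p ∈ Finset.HasAntidiagonal.antidiagonal n, genC φ (p.1 : ℤ) * genC β (p.2 : ℤ) =
      genC (φ + β) (n : ℤ) := by
  induction n with
  | zero => simp only [Finset.HasAntidiagonal.antidiagonal_zero, Finset.sum_singleton, genC_zero', mul_one]
  | succ n ih =>
    apply cancel_succ n
    rw [genC_nat_succ, ← ih]
    have e : ((n : K) + 1) * ∑ p ∈ Finset.HasAntidiagonal.antidiagonal (n + 1),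
        genC φ (p.1 : ℤ) * genC β (p.2 : ℤ) =
        ∑ p ∈ Finset.HasAntidiagonal.antidiagonal (n + 1), ((p.1 : K) * genC φ (p.1 : ℤ)) * genC β (p.2 : ℤ) +
        ∑ p ∈ Finset.HasAntidiagonal.antidiagonal (n + 1), genC φ (p.1 : ℤ) * ((p.2 : K) * genC β (p.2 : ℤ)) := by
      rw [Finset.mul_sum, ← Finset.sum_add_distrib]
      apply Finset.sum_congr rfl
      intro p hp
      have hp' : ((p.1 : K) + p.2) = n + 1 := by
        exact_mod_cast congrArg (Nat.cast (R := K)) (Finset.HasAntidiagonal.mem_antidiagonal.1 hp)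
      rw [← hp']
      ring
    rw [e, Finset.Nat.sum_antidiagonal_succ, Finset.Nat.sum_antidiagonal_succ']
    simp only [Nat.cast_zero, zero_mul, mul_zero, zero_add, add_zero]
    rw [← Finset.sum_add_distrib, Finset.mul_sum]
    apply Finset.sum_congr rfl
    intro p hp
    have hp' : ((p.1 : K) + p.2) = n := by
      exact_mod_cast congrArg (Nat.cast (R := K)) (Finset.HasAntidiagonal.mem_antidiagonal.1 hp)
    have h1 := genC_nat_succ φ p.1
    have h2 := genC_nat_succ β p.2
    rw [← hp']
    push_cast at h1 h2 ⊢
    rw [h1, h2]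
    ring

theorem genC_conv {K : Type*} [CommRing K] [Algebra ℚ K] (φ β : K) (q i j : ℕ) (hi : i < q) :
    ∑ b ∈ Finset.range q, genC φ ((i : ℤ) - b) * genC β ((b : ℤ) - j) =
      genC (φ + β) ((i : ℤ) - j) := by
  by_cases hij : j ≤ i
  · obtain ⟨d, rfl⟩ := Nat.exists_eq_add_of_le hij
    have hd : (((j + d : ℕ) : ℤ) - j) = (d : ℕ) := by push_cast; ring
    obtain ⟨r, rfl⟩ := Nat.exists_eq_add_of_le (show j + (d + 1) ≤ q by omega)
    rw [hd, ← genC_vand, Finset.sum_range_add, Finset.sum_range_add]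
    rw [Finset.sum_eq_zero (s := Finset.range j), Finset.sum_eq_zero (s := Finset.range r),
      zero_add, add_zero, ← Finset.Nat.sum_antidiagonal_swap,
      Finset.Nat.sum_antidiagonal_eq_sum_range_succ_mk]
    · apply Finset.sum_congr rfl
      intro t ht
      have := Finset.mem_range.1 ht
      congr 2
      · simp only [Prod.fst_swap]
        omega
      · simp only [Prod.snd_swap]
        omega
    · intro t _
      rw [genC_neg' φ _ (by omega), zero_mul]
    · intro t ht
      have := Finset.mem_range.1 ht
      rw [genC_neg' β _ (by omega), mul_zero]
  · rw [genC_neg' _ _ (by omega)]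
    apply Finset.sum_eq_zero
    intro b _
    by_cases h : b ≤ i
    · rw [genC_neg' β _ (by omega), mul_zero]
    · rw [genC_neg' φ _ (by omega), zero_mul]

theorem pow_conv {K : Type*} [CommRing K] (φ β : K) (n m : ℕ) (h : m ≤ n) :
    ∑ a ∈ Finset.range (n + 1), (φ ^ (n - a) * (n.choose a : K)) *
      (β ^ (a - m) * (a.choose m : K)) = (φ + β) ^ (n - m) * (n.choose m : K) := by
  obtain ⟨d, rfl⟩ := Nat.exists_eq_add_of_le h
  rw [add_assoc, Finset.sum_range_add, Finset.sum_eq_zero (s := Finset.range m), zero_add,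
    add_comm φ β, Nat.add_sub_cancel_left, add_pow, Finset.sum_mul]
  · apply Finset.sum_congr rfl
    intro t ht
    have ht' := Finset.mem_range.1 ht
    have hc := Nat.choose_mul (n := m + d) (k := m + t) (s := m) (by omega)
    rw [Nat.add_sub_cancel_left, Nat.add_sub_cancel_left] at hc
    have hc' : ((m + d).choose (m + t) : K) * ((m + t).choose m : K) =
      ((m + d).choose m : K) * (d.choose t : K) := by rw [← Nat.cast_mul, hc, Nat.cast_mul]
    rw [Nat.add_sub_cancel_left, Nat.add_sub_add_left]
    linear_combination (φ ^ (d - t) * β ^ t) * hc'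
  · intro a ha
    rw [Nat.choose_eq_zero_of_lt (Finset.mem_range.1 ha)]
    simp

theorem sum_range_mul_block {K : Type*} [CommRing K] (f : ℕ → K) (q n : ℕ) :
    ∑ k ∈ Finset.range (q * n), f k =
      ∑ a ∈ Finset.range n, ∑ b ∈ Finset.range q, f (q * a + b) := by
  induction n with
  | zero => simp
  | succ n ih => rw [Nat.mul_succ, Finset.sum_range_add, ih, Finset.sum_range_succ]

theorem Epow_block {K : Type*} [CommRing K] [Algebra ℚ K] (q : ℕ) (φ : K)
    (a b c d : ℕ) (hb : b < q) (hd : d < q) :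
    Epow q φ (q * a + b) (q * c + d) =
      (φ ^ (a - c) * (a.choose c : K)) * genC φ ((b : ℤ) - d) := by
  have hq : 0 < q := by omega
  unfold Epow
  rw [Nat.mul_add_div hq, Nat.mul_add_div hq, Nat.mul_add_mod, Nat.mul_add_mod,
    Nat.div_eq_of_lt hb, Nat.div_eq_of_lt hd, Nat.mod_eq_of_lt hb, Nat.mod_eq_of_lt hd]
  simp only [add_zero]
  split_ifs with h
  · ring
  · rw [Nat.choose_eq_zero_of_lt (by omega)]
    simp

theorem Epow_lower {K : Type*} [CommRing K] [Algebra ℚ K] (q : ℕ) (φ : K)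
    (N M : ℕ) (h : N < M) : Epow q φ N M = 0 := by
  unfold Epow
  split_ifs with h1
  · have h2 : N / q = M / q := le_antisymm (Nat.div_le_div_right h.le) h1
    have h3 := Nat.div_add_mod N q
    have h4 := Nat.div_add_mod M q
    rw [h2] at h3
    rw [genC_neg' _ _ (by omega)]
    simp
  · rfl

/-- (a) `E₁` is the exponential zero generalized Pascal matrix `₍₀,q₎P_e`:
`E₁(qn+i, qm+j) = binom(n,m)` if `i ≥ j` and `0` if `i < j`;
(b) the family `E_φ` satisfies `E_φ · E_β = E_{φ+β}`. -/
theorem Epow_one_and_mul {K : Type*} [CommRing K] [Algebra ℚ K]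
    (q : ℕ) (hq : 2 ≤ q) (φ β : K) :
    (∀ n m i j : ℕ, i < q → j < q →
      Epow q (1 : K) (q * n + i) (q * m + j) =
        if j ≤ i then (n.choose m : K) else 0) ∧
    (∀ N M : ℕ, M ≤ N →
      ∑ k ∈ Finset.Icc M N, Epow q φ N k * Epow q β k M = Epow q (φ + β) N M) := by
  have hq0 : 0 < q := by omega
  refine ⟨?_, ?_⟩
  · intro n m i j hi hj
    rw [Epow_block q _ _ _ _ _ hi hj]
    split_ifs with h
    · have : ((i : ℤ) - j) = ((i - j : ℕ) : ℤ) := by omega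
      rw [this, genC_one]
      simp
    · rw [genC_neg' _ _ (by omega), mul_zero]
  · intro N M hMN
    have hN := Nat.div_add_mod N q
    have hM := Nat.div_add_mod M q
    have hi := Nat.mod_lt N hq0
    have hj := Nat.mod_lt M hq0
    have hnm : M / q ≤ N / q := Nat.div_le_div_right hMN
    have hsub : Finset.Icc M N ⊆ Finset.range (q * (N / q + 1)) := by
      intro k hk
      have := Finset.mem_Icc.1 hk
      rw [Finset.mem_range, Nat.mul_succ]
      omega
    rw [Finset.sum_subset hsub]
    · generalize N / q = n at *
      generalize N % q = i at *
      generalize M / q = m at *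
      generalize M % q = j at *
      subst hN
      subst hM
      rw [sum_range_mul_block, Epow_block q _ _ _ _ _ hi hj, ← pow_conv φ β n m hnm,
        ← genC_conv φ β q i j hi, Finset.sum_mul_sum]
      apply Finset.sum_congr rfl
      intro a _
      apply Finset.sum_congr rfl
      intro b hb
      have hb' := Finset.mem_range.1 hb
      rw [Epow_block q _ _ _ _ _ hi hb', Epow_block q _ _ _ _ _ hb' hj]
      ring
    · intro k _ hk
      by_cases h : k < M
      · rw [Epow_lower q β k M h, mul_zero]
      · rw [Epow_lower q φ N k, zero_mul]
        by_contra h'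
        exact hk (Finset.mem_Icc.2 ⟨by omega, by omega⟩)
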